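/- For all natural numbers p, q with p < q < 2p − ⌊|p−2|/2⌋ (an inequality of integers), and for every odd natural number l with 1 ≤ l ≤ F(p,q) − 1, there exist natural numbers p' ≤ p−1 and q' ≤ q−1 such that f(p',q') ⊕ f(p−1−p', q−1−q') = l. -/

import Mathlib

/-!
The function `f` has a closed form `G`: on the diagonal `G p p = 1`, and off the diagonal
`G p q = 2 * min (min p q) (c (p + q))`, where `c s = ⌊(2 s - 2) / 5⌋` except that `c 3 = 1`.
It is proved by strong induction (`f_eq_G`), through the characterisation of the mex:

* *Odd values below `G p q`* (`odd_attained`). For `p < q`, a diagonal option `(k, k)` contributes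
  `1`, so the complementary option gives `1 ⊕ G j (j + q - p)` with `j < p` arbitrary. Along this
  line `G / 2` starts at `0` and grows by at most `1` per step, so it misses no intermediate value.
* *Even values below `G p q`* (`even_attained`). The options `(p - 1 - x, 0)` have value `0` and
  their complements run over `G x (q - 1)`, `x ≤ p - 2`, again without gaps. At most one even value
  is left over, and it comes from one of the options `(0, 1)`, `(1, 2)`, `(2, 1)`.
* *`G p q` itself is not attained* (`not_attained`). Options involving a diagonal position give an
  odd value; for the others the Nim-sum is at most the sum, which is too small because
  `c s + c t < c (s + t + 2)` for `s, t ≥ 1` except `s = t = 3`, where the Nim-sum `1 ⊕ 1` vanishes.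

In the range of the theorem `F p q ≤ G p q`, so the statement is an instance of `odd_attained`.
-/

/-- `mex S` is the least natural number not belonging to `S`. -/
noncomputable def mex (S : Set ℕ) : ℕ := sInf {n : ℕ | n ∉ S}

/-- `h 0 = 0` and `h n = 1` for all `n ≥ 1`. -/
def h : ℕ → ℕ
  | 0 => 0
  | _ + 1 => 1

/-- The nimber of the Circular sprout game `CS₄(𝒫₄ : p,1,q,1)`, defined by strong
recursion: `f p q` is the mex of the set consisting of `h p ^^^ h q` together with all
values `f p' q' ^^^ f (p-1-p') (q-1-q')` for `0 ≤ p' ≤ p-1` and `0 ≤ q' ≤ q-1`. -/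
noncomputable def f (p q : ℕ) : ℕ :=
  mex ({h p ^^^ h q} ∪
    ⋃ (p' : ℕ) (_ : p' < p) (q' : ℕ) (_ : q' < q),
      {f p' q' ^^^ f (p - 1 - p') (q - 1 - q')})
termination_by p
decreasing_by
  · omega
  · omega

/-- `idx p q` is the unique element of `{1,2,3,4,5}` congruent to `p + q` modulo `5`. -/
def idx (p q : ℕ) : ℕ := if (p + q) % 5 = 0 then 5 else (p + q) % 5

/-- `F p q = (4/5)·(p + q − idx p q) + 2·⌊idx p q / 4⌋`. -/
def F (p q : ℕ) : ℕ := 4 * ((p + q - idx p q) / 5) + 2 * (idx p q / 4)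

/-- The bound on `f p q / 2` that depends only on the sum `s = p + q`. The value at `3` is
exceptional, because `f 1 2 = 2`. -/
def c (s : ℕ) : ℕ := if s = 3 then 1 else (2 * s - 2) / 5

/-- Half of the off-diagonal value of `f`. -/
def g (p q : ℕ) : ℕ := min (min p q) (c (p + q))

/-- The closed form of `f`. -/
def G (p q : ℕ) : ℕ := if p = q then 1 else 2 * g p q

/-- `l` is the value of an option of the position `(p, q)`, computed with the closed form `G`. -/
def Attained (p q l : ℕ) : Prop :=
  ∃ a < p, ∃ b < q, G a b ^^^ G (p - 1 - a) (q - 1 - b) = l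

lemma g_comm (p q : ℕ) : g p q = g q p := by
  unfold g
  rw [min_comm p q, add_comm p q]

lemma G_comm (p q : ℕ) : G p q = G q p := by
  unfold G
  rw [g_comm p q]
  simp only [eq_comm]

lemma Attained.swap {p q l : ℕ} (hA : Attained p q l) : Attained q p l := by
  obtain ⟨a, ha, b, hb, hab⟩ := hA
  exact ⟨b, hb, a, ha, by rw [G_comm b a, G_comm (q - 1 - b), hab]⟩

lemma two_mul_xor (a b : ℕ) : (2 * a) ^^^ (2 * b) = 2 * (a ^^^ b) := by
  have := Nat.shiftLeft_xor_distrib (a := a) (b := b) (i := 1)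
  simp only [Nat.shiftLeft_eq, pow_one] at this
  rw [mul_comm 2 a, mul_comm 2 b, mul_comm 2, this]

lemma one_xor_two_mul (a : ℕ) : 1 ^^^ (2 * a) = 2 * a + 1 := by
  rw [Nat.xor_comm]
  exact Nat.xor_one_of_even (even_two_mul a)

lemma xor_le_sum (a b : ℕ) : a ^^^ b ≤ a + b := by
  induction a using Nat.binaryRec' generalizing b with
  | zero => simp
  | bit x a _ ih =>
    induction b using Nat.bitCasesOn with
    | bit y b =>
      have := ih b
      rw [Nat.xor_bit]
      cases x <;> cases y <;> simp [Nat.bit] <;> omega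

lemma mex_eq {S : Set ℕ} {m : ℕ} (hm : m ∉ S) (hlt : ∀ l < m, l ∈ S) : mex S = m := by
  apply le_antisymm
  · exact Nat.sInf_le hm
  · by_contra hcon
    have hne : {n : ℕ | n ∉ S}.Nonempty := ⟨m, hm⟩
    exact Nat.sInf_mem hne (hlt _ (not_le.mp hcon))

/-- A sequence of naturals starting at `0` with increments at most `1` skips no value. -/
lemma exists_eq_of_step (u : ℕ → ℕ) (h0 : u 0 = 0) (n : ℕ) (hs : ∀ k < n, u (k + 1) ≤ u k + 1)
    (m : ℕ) (hm : m ≤ u n) : ∃ k ≤ n, u k = m := by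
  induction n with
  | zero => exact ⟨0, le_rfl, by omega⟩
  | succ n ih =>
    by_cases hmn : m ≤ u n
    · obtain ⟨k, hk, hkm⟩ := ih (fun k hk => hs k (by omega)) hmn
      exact ⟨k, by omega, hkm⟩
    · exact ⟨n + 1, le_rfl, by have := hs n (by omega); omega⟩

lemma odd_attained {p q m : ℕ} (hpq : p < q) (hm : m < g p q) : Attained p q (2 * m + 1) := by
  have hp : 0 < p := by unfold g at hm; omega
  obtain ⟨k, hk, hkm⟩ := exists_eq_of_step (fun k => g k (k + (q - p))) (by simp [g]) (p - 1)
    (by intro k _; unfold g c; split_ifs <;> omega) m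
    (by unfold g c at *; split_ifs at * <;> omega)
  refine ⟨p - 1 - k, by omega, p - 1 - k, by omega, ?_⟩
  have e1 : p - 1 - (p - 1 - k) = k := by omega
  have e2 : q - 1 - (p - 1 - k) = k + (q - p) := by omega
  rw [e1, e2, G, if_pos rfl, G, if_neg (by omega), one_xor_two_mul, hkm]

/-- Two off-diagonal complementary options give twice the Nim-sum of the halves. -/
lemma attained_of_g {p q a b x y m : ℕ} (hp : a + x + 1 = p) (hq : b + y + 1 = q)
    (hab : a ≠ b) (hxy : x ≠ y) (hm : g a b ^^^ g x y = m) : Attained p q (2 * m) := by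
  refine ⟨a, by omega, b, by omega, ?_⟩
  have e1 : p - 1 - a = x := by omega
  have e2 : q - 1 - b = y := by omega
  rw [e1, e2, G, if_neg hab, G, if_neg hxy, two_mul_xor, hm]

lemma even_attained {p q m : ℕ} (hpq : p < q) (h0 : 0 < m) (hm : m < g p q) :
    Attained p q (2 * m) := by
  have hp : 2 ≤ p := by unfold g at hm; omega
  by_cases h1 : m ≤ g (p - 2) (q - 1)
  · obtain ⟨x, hx, hxm⟩ := exists_eq_of_step (fun x => g x (q - 1)) (by simp [g]) (p - 2)
      (by intro k _; unfold g c; split_ifs <;> omega) m h1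
    exact attained_of_g (a := p - 1 - x) (b := 0) (x := x) (y := q - 1) (by omega) (by omega)
      (by omega) (by omega) (by simpa [g] using hxm)
  by_cases h2 : p - 2 < c (p + q - 3)
  · -- only `m = p - 1` remains, and `q ≠ p + 1`
    have hm1 : g (p - 1) (q - 2) = m ∧ q ≠ p + 1 := by
      unfold g c at *
      split_ifs at * <;> omega
    exact attained_of_g (a := 0) (b := 1) (x := p - 1) (y := q - 2) (by omega) (by omega)
      (by omega) (by omega) (by simpa [g] using hm1.1)
  · -- here `p + q ≡ 1 [MOD 5]` and `m = c (p + q) - 1` is odd, so `m = 1 ⊕ (m - 1)`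
    have hodd : ∃ t, m = 2 * t + 1 ∧ c (p + q - 5) = 2 * t ∧ 2 * t + 2 ≤ p ∧
        (q = p + 1 → 2 * t + 3 ≤ p) := by
      obtain ⟨k, r, hr, hs⟩ : ∃ k r, r < 5 ∧ p + q = 5 * k + r :=
        ⟨(p + q) / 5, (p + q) % 5, by omega, by omega⟩
      have hk : r = 1 ∧ m + 1 = 2 * k := by
        unfold g c at *
        interval_cases r <;> split_ifs at * <;> omega
      refine ⟨k - 1, ?_⟩
      unfold g c at *
      split_ifs at * <;> omega
    obtain ⟨t, rfl, hc, htp, htq⟩ := hodd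
    have h12 : g 1 2 = 1 := by decide
    have h21 : g 2 1 = 1 := by decide
    by_cases hd : q = p + 1
    · have hg : g (p - 3) (q - 2) = 2 * t := by
        have e : p - 3 + (q - 2) = p + q - 5 := by omega
        have := htq hd
        rw [g, e, hc]
        omega
      exact attained_of_g (a := 2) (b := 1) (x := p - 3) (y := q - 2) (by omega) (by omega)
        (by omega) (by omega) (by rw [h21, hg, one_xor_two_mul])
    · have hg : g (p - 2) (q - 3) = 2 * t := by
        have e : p - 2 + (q - 3) = p + q - 5 := by omega
        rw [g, e, hc]
        omega
      exact attained_of_g (a := 1) (b := 2) (x := p - 2) (y := q - 3) (by omega) (by omega)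
        (by omega) (by omega) (by rw [h12, hg, one_xor_two_mul])

lemma not_attained {p q : ℕ} (hpq : p ≠ q) : ¬ Attained p q (2 * g p q) := by
  rintro ⟨a, ha, b, hb, hab⟩
  obtain ⟨x, rfl⟩ : ∃ x, p = a + x + 1 := ⟨p - 1 - a, by omega⟩
  obtain ⟨y, rfl⟩ : ∃ y, q = b + y + 1 := ⟨q - 1 - b, by omega⟩
  have e1 : a + x + 1 - 1 - a = x := by omega
  have e2 : b + y + 1 - 1 - b = y := by omega
  rw [e1, e2] at hab
  by_cases h1 : a = b
  · rw [G, if_pos h1, G, if_neg (by omega), one_xor_two_mul] at hab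
    omega
  by_cases h2 : x = y
  · rw [G, if_neg h1, G, if_pos h2, Nat.xor_comm, one_xor_two_mul] at hab
    omega
  rw [G, if_neg h1, G, if_neg h2, two_mul_xor] at hab
  have hle := xor_le_sum (g a b) (g x y)
  by_cases h11 : g a b = g x y
  · rw [h11, Nat.xor_self] at hab
    unfold g c at hab
    split_ifs at hab <;> omega
  · unfold g c at *
    split_ifs at * <;> omega

lemma not_attained_diag (p : ℕ) : ¬ Attained p p 1 := by
  rintro ⟨a, ha, b, hb, hab⟩
  by_cases h1 : a = b
  · subst h1
    simp [G] at hab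
  · rw [G, if_neg h1, G, if_neg (by omega), two_mul_xor] at hab
    omega

lemma attained_of_lt {p q l : ℕ} (hpq : p ≠ q) (h0 : 0 < l) (hl : l < 2 * g p q) :
    Attained p q l := by
  have key : ∀ p q : ℕ, p < q → l < 2 * g p q → Attained p q l := by
    intro p q hpq hl
    obtain ⟨m, hm | hm⟩ := Nat.even_or_odd' l
    · rw [hm]
      exact even_attained hpq (by omega) (by omega)
    · rw [hm]
      exact odd_attained hpq (by omega)
  rcases lt_or_gt_of_ne hpq with hlt | hlt
  · exact key p q hlt hl
  · exact (key q p hlt (by rwa [g_comm q p])).swap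

lemma h_pos {n : ℕ} (hn : 0 < n) : h n = 1 := by
  obtain ⟨k, rfl⟩ : ∃ k, n = k + 1 := ⟨n - 1, by omega⟩
  rfl

/-- The closed form of the nimber `f`. -/
theorem f_eq_G (p q : ℕ) : f p q = G p q := by
  induction p using Nat.strong_induction_on generalizing q with
  | _ p ih =>
    rw [f]
    have hmem : ∀ l, l ∈ ({h p ^^^ h q} ∪ ⋃ (p' : ℕ) (_ : p' < p) (q' : ℕ) (_ : q' < q),
        {f p' q' ^^^ f (p - 1 - p') (q - 1 - q')} : Set ℕ) ↔
        l = h p ^^^ h q ∨ Attained p q l := by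
      intro l
      simp only [Set.mem_union, Set.mem_singleton_iff, Set.mem_iUnion, Attained, exists_prop]
      apply or_congr_right
      constructor
      · rintro ⟨a, ha, b, hb, e⟩
        exact ⟨a, ha, b, hb, by rw [e, ih a ha, ih (p - 1 - a) (by omega)]⟩
      · rintro ⟨a, ha, b, hb, e⟩
        exact ⟨a, ha, b, hb, by rw [← e, ih a ha, ih (p - 1 - a) (by omega)]⟩
    by_cases hpq : p = q
    · subst hpq
      rw [G, if_pos rfl]
      refine mex_eq ?_ ?_
      · rw [hmem]
        rintro (e | e)
        · simp at e
        · exact not_attained_diag p e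
      · intro l hl
        rw [hmem]
        left
        simp
        omega
    · rw [G, if_neg hpq]
      have hopt : 0 < p → 0 < q → h p ^^^ h q = 0 := by
        intro hp hq
        rw [h_pos hp, h_pos hq, Nat.xor_self]
      refine mex_eq ?_ ?_
      · rw [hmem]
        rintro (e | e)
        · rcases Nat.eq_zero_or_pos p with rfl | hp
          · rw [h_pos (n := q) (by omega)] at e
            simp [g, h] at e
          · rcases Nat.eq_zero_or_pos q with rfl | hq
            · rw [h_pos hp] at e
              simp [g, h] at e
            · rw [hopt hp hq] at e
              unfold g c at e
              split_ifs at e <;> omega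
        · exact not_attained hpq e
      · intro l hl
        rw [hmem]
        rcases Nat.eq_zero_or_pos l with rfl | h0
        · left
          exact (hopt (by unfold g at hl; omega) (by unfold g at hl; omega)).symm
        · right
          exact attained_of_lt hpq h0 hl

theorem stmt8 (p q : ℕ) (hpq : p < q)
    (hq : (q : ℤ) < 2 * (p : ℤ) - |(p : ℤ) - 2| / 2)
    (l : ℕ) (hl : Odd l) (hl1 : 1 ≤ l) (hl2 : l ≤ F p q - 1) :
    ∃ p' ≤ p - 1, ∃ q' ≤ q - 1,
      f p' q' ^^^ f (p - 1 - p') (q - 1 - q') = l := by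
  have hF : F p q ≤ 2 * g p q := by
    have hq' : 2 * q ≤ 3 * p + 1 := by
      rcases le_total 2 p with h2 | h2
      · rw [abs_of_nonneg (by omega)] at hq
        omega
      · rw [abs_of_nonpos (by omega)] at hq
        omega
    obtain ⟨k, r, hr, hs⟩ : ∃ k r, r < 5 ∧ p + q = 5 * k + r :=
      ⟨(p + q) / 5, (p + q) % 5, by omega, by omega⟩
    unfold F idx g c
    interval_cases r <;> split_ifs <;> omega
  obtain ⟨m, rfl⟩ := hl
  obtain ⟨a, ha, b, hb, hab⟩ := odd_attained (m := m) hpq (by omega)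
  exact ⟨a, by omega, b, by omega, by rw [f_eq_G, f_eq_G, hab]⟩
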